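/- Vanishing of non-matching string correlators in class AIII (Theorem 3, α ≠ ω part). Let N_z, N_Z ≥ 0 be integers, z_1,…,z_{N_z} ∈ ℂ with |z_j| < 1, and Z_1,…,Z_{N_Z} ∈ ℂ with |Z_k| > 1. Define W(z) = (1/2) Σ_{j=1}^{N_z} [ Log(1 − z_j/z) − Log(1 − conj(z_j)·z) ] + (1/2) Σ_{k=1}^{N_Z} [ Log(1 − z/Z_k) − Log(1 − 1/(conj(Z_k)·z)) ], with Log the principal branch of the logarithm. Then for every nonzero integer m, the symbol t_m(e^{iθ}) = e^{imθ} · exp(W(e^{iθ})) satisfies lim_{N→∞} D_N[t_m] = 0. (For the AIII chain with winding number ω, this says the string correlator ⟨Õ_α(1)Õ_α(N+1)⟩ = |D_N[t_{ω−α}]|² tends to 0 for every α ≠ ω.) -/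

import Mathlib

open scoped BigOperators
open Filter

/-- The `k`-th Fourier coefficient of a symbol `t` on the unit circle. -/
noncomputable def symbolCoeff (t : ℂ → ℂ) (k : ℤ) : ℂ :=
  (1 / (2 * Real.pi)) *
    ∫ θ in (0:ℝ)..(2 * Real.pi),
      t (Complex.exp (Complex.I * (θ : ℂ))) * Complex.exp (-(Complex.I * (k : ℂ) * (θ : ℂ)))

/-- The `N × N` Toeplitz determinant `D_N[t]` generated by the symbol `t`. -/
noncomputable def toeplitzDet (t : ℂ → ℂ) (N : ℕ) : ℂ :=
  Matrix.det (Matrix.of fun m n : Fin N => symbolCoeff t ((m : ℤ) - (n : ℤ)))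

/-- The function `W(z)` built from principal-branch logarithms, so that `e^{W}` is the
(winding-number-removed) AIII symbol. -/
noncomputable def aiiiW (Nz NZ : ℕ) (z : Fin Nz → ℂ) (Z : Fin NZ → ℂ) (w : ℂ) : ℂ :=
  (1 / 2) * ∑ j, (Complex.log (1 - z j / w) - Complex.log (1 - (starRingEnd ℂ) (z j) * w)) +
  (1 / 2) * ∑ k, (Complex.log (1 - w / Z k) - Complex.log (1 - 1 / ((starRingEnd ℂ) (Z k) * w)))

/-! On the unit circle `W = g - conj g` with `g` analytic in the disc, so `t = w ^ m * exp W` is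
unimodular and multiplication by `t` is a contraction of `L²`; its finite sections along the
exponentials `w ^ n`, `n ≥ 0`, are the Toeplitz matrices of `t`. For `m = -n < 0` the analytic
function `f = exp (-g)` satisfies `t * f = conj (w ^ n * f)`, so `t * f` has only negative
frequencies: `f` is a nonzero vector of the Hardy space killed by the Toeplitz operator of `t`.

A contraction `A` of a finite-dimensional space satisfies `|det A| * ‖v‖ ≤ ‖A v‖`, as its singular
values are at most `1`. For the `N`-th finite section and the truncated Fourier series `v` of `f`,
the right-hand side is at most the tail of that series, because `f` is killed by the full operator;
hence the determinants tend to zero. Complex conjugation of the symbol exchanges `m` and `-m`. -/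

open MeasureTheory Complex Module
open scoped ComplexConjugate ENNReal InnerProductSpace Topology

section NormDet

variable {𝕜 E F : Type*} [RCLike 𝕜] [NormedAddCommGroup E] [InnerProductSpace 𝕜 E]
  [FiniteDimensional 𝕜 E] [NormedAddCommGroup F] [InnerProductSpace 𝕜 F] [FiniteDimensional 𝕜 F]

theorem norm_sq_apply_eq_sum_sq_singularValues (A : E →ₗ[𝕜] F) (v : E) :
    ‖A v‖ ^ 2 = ∑ i : Fin (finrank 𝕜 E), A.singularValues i ^ 2 *
      ‖(A.isSymmetric_adjoint_comp_self.eigenvectorBasis rfl).repr v i‖ ^ 2 := by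
  set hA := A.isSymmetric_adjoint_comp_self
  set b := hA.eigenvectorBasis rfl
  have hterm (i) : ⟪v, b i⟫_𝕜 * ⟪b i, (A.adjoint ∘ₗ A) v⟫_𝕜 =
      ((A.singularValues i ^ 2 * ‖b.repr v i‖ ^ 2 : ℝ) : 𝕜) := by
    rw [← b.repr_apply_apply, hA.eigenvectorBasis_apply_self_apply, ← inner_conj_symm,
      ← b.repr_apply_apply, mul_left_comm, RCLike.conj_mul, A.sq_singularValues_fin rfl]
    push_cast
    rfl
  have hsum : ((‖A v‖ ^ 2 : ℝ) : 𝕜) = ⟪v, (A.adjoint ∘ₗ A) v⟫_𝕜 := by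
    rw [LinearMap.comp_apply, LinearMap.adjoint_inner_right, inner_self_eq_norm_sq_to_K]
    push_cast
    rfl
  rw [← b.sum_inner_mul_inner, Finset.sum_congr rfl fun i _ => hterm i] at hsum
  exact_mod_cast hsum

theorem singularValues_le_one {A : E →ₗ[𝕜] F} (hA : ∀ v, ‖A v‖ ≤ ‖v‖) (i : ℕ) :
    A.singularValues i ≤ 1 := by
  rcases le_or_gt (finrank 𝕜 E) i with hi | hi
  · simp [A.singularValues_of_finrank_le hi]
  lift i to Fin (finrank 𝕜 E) using hi
  set b := A.isSymmetric_adjoint_comp_self.eigenvectorBasis rfl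
  have hnorm : ‖A (b i)‖ ^ 2 = A.singularValues i ^ 2 := by
    classical
    simp [norm_sq_apply_eq_sum_sq_singularValues, b, apply_ite norm]
  rw [← (sq_eq_sq₀ (norm_nonneg _) (A.singularValues_nonneg i)).1 hnorm, ← b.norm_eq_one i]
  exact hA _

theorem normDet_le_singularValues {A : E →ₗ[𝕜] F} (hA : ∀ v, ‖A v‖ ≤ ‖v‖) {i : ℕ}
    (hi : i < finrank 𝕜 E) : A.normDet ≤ A.singularValues i := by
  rw [A.normDet_eq_prod_singularValues, ← Finset.mul_prod_erase _ _ (Finset.mem_range.2 hi)]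
  exact mul_le_of_le_one_right (A.singularValues_nonneg i) <|
    Finset.prod_le_one (fun j _ => A.singularValues_nonneg j) fun j _ => singularValues_le_one hA j

theorem normDet_mul_norm_le_norm_apply {A : E →ₗ[𝕜] F} (hA : ∀ v, ‖A v‖ ≤ ‖v‖) (v : E) :
    A.normDet * ‖v‖ ≤ ‖A v‖ := by
  set b := A.isSymmetric_adjoint_comp_self.eigenvectorBasis rfl
  refine (sq_le_sq₀ (mul_nonneg A.normDet_nonneg (norm_nonneg v)) (norm_nonneg _)).1 ?_
  calc (A.normDet * ‖v‖) ^ 2 = ∑ i, A.normDet ^ 2 * ‖b.repr v i‖ ^ 2 := by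
        rw [mul_pow, ← Finset.mul_sum, ← b.repr.norm_map v, EuclideanSpace.norm_sq_eq]
    _ ≤ ∑ i : Fin (finrank 𝕜 E), A.singularValues i ^ 2 * ‖b.repr v i‖ ^ 2 := by
        gcongr with i
        · exact A.normDet_nonneg
        · exact normDet_le_singularValues hA i.isLt
    _ = ‖A v‖ ^ 2 := (norm_sq_apply_eq_sum_sq_singularValues A v).symm

end NormDet

section FiniteSection

variable {𝕜 H ι : Type*} [RCLike 𝕜] [NormedAddCommGroup H] [InnerProductSpace 𝕜 H]

/-- The finite section of the operator `A` along the family `e`: its matrix entries against `e`. -/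
def finiteSection (e : ι → H) (A : H →ₗ[𝕜] H) : Matrix ι ι 𝕜 :=
  .of fun i j => ⟪e i, A (e j)⟫_𝕜

variable [Fintype ι]

theorem norm_toLp_inner_le {e : ι → H} (he : Orthonormal 𝕜 e) (x : H) :
    ‖WithLp.toLp 2 fun i => ⟪e i, x⟫_𝕜‖ ≤ ‖x‖ := by
  refine (sq_le_sq₀ (norm_nonneg _) (norm_nonneg x)).1 ?_
  rw [EuclideanSpace.norm_sq_eq]
  exact he.sum_inner_products_le x

theorem norm_sum_smul_eq {e : ι → H} (he : Orthonormal 𝕜 e) (c : EuclideanSpace 𝕜 ι) :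
    ‖∑ i, c i • e i‖ = ‖c‖ := by
  have h := he.inner_sum c c Finset.univ
  simp only [RCLike.conj_mul, inner_self_eq_norm_sq_to_K] at h
  rw [← sq_eq_sq₀ (norm_nonneg _) (norm_nonneg c), EuclideanSpace.norm_sq_eq]
  exact_mod_cast h

variable [DecidableEq ι]

theorem toEuclideanLin_finiteSection (e : ι → H) (A : H →ₗ[𝕜] H) (c : EuclideanSpace 𝕜 ι) :
    (finiteSection e A).toEuclideanLin c = WithLp.toLp 2 fun i => ⟪e i, A (∑ j, c j • e j)⟫_𝕜 := by
  ext i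
  simp [finiteSection, Matrix.mulVec, dotProduct, inner_sum, inner_smul_right, mul_comm]

theorem norm_det_finiteSection_mul_norm_le {e : ι → H} (he : Orthonormal 𝕜 e) {A : H →ₗ[𝕜] H}
    (hA : ∀ x, ‖A x‖ ≤ ‖x‖) {f : H} (hf : ∀ i, ⟪e i, A f⟫_𝕜 = 0) (c : ι → 𝕜) :
    ‖(finiteSection e A).det‖ * ‖∑ i, c i • e i‖ ≤ ‖∑ i, c i • e i - f‖ := by
  set v : EuclideanSpace 𝕜 ι := WithLp.toLp 2 c
  set M := (finiteSection e A).toEuclideanLin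
  have hM (u) : ‖M u‖ ≤ ‖u‖ := by
    rw [toEuclideanLin_finiteSection, ← norm_sum_smul_eq he u]
    exact (norm_toLp_inner_le he _).trans (hA _)
  have hdet : ‖(finiteSection e A).det‖ = M.normDet := by
    simp only [M, LinearMap.normDet_eq_norm_det, Matrix.toLpLin_eq_toLin, LinearMap.det_toLin]
  calc ‖(finiteSection e A).det‖ * ‖∑ i, c i • e i‖ = M.normDet * ‖v‖ := by
        rw [hdet, ← norm_sum_smul_eq he v]
    _ ≤ ‖M v‖ := normDet_mul_norm_le_norm_apply hM v
    _ = ‖WithLp.toLp 2 fun i => ⟪e i, A (∑ j, c j • e j - f)⟫_𝕜‖ := by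
        simp only [M, v, toEuclideanLin_finiteSection, map_sub, inner_sub_right, hf, sub_zero]
    _ ≤ ‖∑ i, c i • e i - f‖ := (norm_toLp_inner_le he _).trans (hA _)

theorem tendsto_det_finiteSection_zero {e : ℕ → H} (he : Orthonormal 𝕜 e) {A : H →ₗ[𝕜] H}
    (hA : ∀ x, ‖A x‖ ≤ ‖x‖) {c : ℕ → 𝕜} {f : H} (hc : HasSum (fun n => c n • e n) f) (hf0 : f ≠ 0)
    (hf : ∀ n, ⟪e n, A f⟫_𝕜 = 0) :
    Tendsto (fun N : ℕ => (finiteSection (fun n : Fin N => e n) A).det) atTop (𝓝 0) := by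
  set s : ℕ → H := fun N => ∑ n ∈ Finset.range N, c n • e n
  have hs : Tendsto s atTop (𝓝 f) := hc.tendsto_sum_nat
  have hratio : Tendsto (fun N => ‖s N - f‖ / ‖s N‖) atTop (𝓝 0) := by
    simpa [Pi.div_def] using (hs.sub_const f).norm.div hs.norm (norm_ne_zero_iff.2 hf0)
  refine squeeze_zero_norm' ?_ hratio
  filter_upwards [hs.eventually_ne hf0] with N hN
  rw [le_div_iff₀ (norm_pos_iff.2 hN)]
  simpa only [s, Finset.sum_range, Function.comp_def] using norm_det_finiteSection_mul_norm_le
    (he.comp _ Fin.val_injective) hA (fun n : Fin N => hf n) (fun n : Fin N => c n)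

end FiniteSection

section Circle

open AddCircle

variable {T : ℝ} [hT : Fact (0 < T)]

/-- The Laurent operator of the symbol `t`: multiplication by `t` on `L²` of the circle. -/
noncomputable def laurentOperator (t : Lp ℂ ∞ (haarAddCircle (T := T))) :
    Lp ℂ 2 (haarAddCircle (T := T)) →L[ℂ] Lp ℂ 2 (haarAddCircle (T := T)) :=
  (ContinuousLinearMap.mul ℂ ℂ).holderL haarAddCircle ∞ 2 2 t

theorem coeFn_laurentOperator (t : Lp ℂ ∞ (haarAddCircle (T := T)))
    (f : Lp ℂ 2 (haarAddCircle (T := T))) :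
    laurentOperator t f =ᵐ[haarAddCircle] fun x => t x * f x :=
  (ContinuousLinearMap.mul ℂ ℂ).coeFn_holder t f

theorem norm_laurentOperator_apply_le (t : Lp ℂ ∞ (haarAddCircle (T := T)))
    (f : Lp ℂ 2 (haarAddCircle (T := T))) : ‖laurentOperator t f‖ ≤ ‖t‖ * ‖f‖ := by
  simpa [laurentOperator] using
    (ContinuousLinearMap.mul ℂ ℂ).norm_holder_apply_apply_le (r := 2) t f

theorem inner_fourierLp (f : Lp ℂ 2 (haarAddCircle (T := T))) (k : ℤ) :
    ⟪fourierLp 2 k, f⟫_ℂ = fourierCoeff f k := by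
  rw [← fourierBasis_repr, fourierBasis.repr_apply_apply, coe_fourierBasis]

theorem fourierCoeff_mul_fourier (t : AddCircle T → ℂ) (k n : ℤ) :
    fourierCoeff (fun x => t x * fourier n x) k = fourierCoeff t (k - n) := by
  refine integral_congr_ae (.of_forall fun x => ?_)
  simp only [smul_eq_mul, neg_sub, sub_eq_add_neg n k, fourier_add]
  ring

theorem inner_fourierLp_laurentOperator_fourierLp (t : Lp ℂ ∞ (haarAddCircle (T := T)))
    (k n : ℤ) :
    ⟪fourierLp 2 k, laurentOperator t (fourierLp 2 n)⟫_ℂ = fourierCoeff t (k - n) := by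
  have hmul : laurentOperator t (fourierLp 2 n) =ᵐ[haarAddCircle] fun x => t x * fourier n x := by
    filter_upwards [coeFn_laurentOperator t (fourierLp 2 n), coeFn_fourierLp 2 n] with x hx hn
    rw [hx, hn]
  rw [inner_fourierLp, fourierCoeff_congr_ae hmul, fourierCoeff_mul_fourier]

theorem hasSum_nat_fourierLp {f : Lp ℂ 2 (haarAddCircle (T := T))}
    (hf : ∀ k < 0, fourierCoeff f k = 0) :
    HasSum (fun n : ℕ => fourierCoeff f n • fourierLp 2 (n : ℤ)) f := by
  refine (Nat.cast_injective.hasSum_iff (f := fun k : ℤ => fourierCoeff f k • fourierLp 2 k)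
    fun k hk => ?_).2 (hasSum_fourier_series_L2 f)
  rw [hf k (by simpa using hk), zero_smul]

theorem tendsto_det_fourierCoeff_zero_of_Lp {t : Lp ℂ ∞ (haarAddCircle (T := T))} (ht : ‖t‖ ≤ 1)
    {f : Lp ℂ 2 (haarAddCircle (T := T))} (hf0 : f ≠ 0) (hf : ∀ k < 0, fourierCoeff f k = 0)
    (htf : ∀ k, 0 ≤ k → fourierCoeff (fun x => t x * f x) k = 0) :
    Tendsto (fun N : ℕ => (Matrix.of fun m n : Fin N => fourierCoeff t ((m : ℤ) - n)).det)
      atTop (𝓝 0) := by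
  have hortho := (orthonormal_fourier (T := T)).comp _ Nat.cast_injective
  have hcontr (g) : ‖laurentOperator t g‖ ≤ ‖g‖ :=
    (norm_laurentOperator_apply_le t g).trans (mul_le_of_le_one_left (norm_nonneg g) ht)
  have hker (n : ℕ) : ⟪fourierLp 2 (n : ℤ), laurentOperator t f⟫_ℂ = 0 := by
    rw [inner_fourierLp, fourierCoeff_congr_ae (coeFn_laurentOperator t f), htf n n.cast_nonneg]
  simpa only [finiteSection, Function.comp_apply, ContinuousLinearMap.coe_coe,
    inner_fourierLp_laurentOperator_fourierLp] using tendsto_det_finiteSection_zero hortho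
      (A := (laurentOperator t).toLinearMap) hcontr (hasSum_nat_fourierLp hf) hf0 hker

theorem tendsto_det_fourierCoeff_zero {t f : AddCircle T → ℂ}
    (ht : AEStronglyMeasurable t haarAddCircle) (ht1 : ∀ᵐ x ∂haarAddCircle, ‖t x‖ ≤ 1)
    (hf2 : MemLp f 2 haarAddCircle) (hf0 : ¬ f =ᵐ[haarAddCircle] 0)
    (hf : ∀ k < 0, fourierCoeff f k = 0)
    (htf : ∀ k, 0 ≤ k → fourierCoeff (fun x => t x * f x) k = 0) :
    Tendsto (fun N : ℕ => (Matrix.of fun m n : Fin N => fourierCoeff t ((m : ℤ) - n)).det)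
      atTop (𝓝 0) := by
  have htop : MemLp t ∞ haarAddCircle := memLp_top_of_bound ht 1 ht1
  have hnorm : ‖htop.toLp‖ ≤ 1 := by
    have hae : ∀ᵐ x ∂haarAddCircle, ‖htop.toLp t x‖ ≤ 1 := by
      filter_upwards [htop.coeFn_toLp, ht1] with x hx h1
      rwa [hx]
    simpa using Lp.norm_le_of_ae_bound zero_le_one hae
  have hmul : (fun x => htop.toLp t x * hf2.toLp f x) =ᵐ[haarAddCircle] fun x => t x * f x :=
    htop.coeFn_toLp.mul hf2.coeFn_toLp
  have key := tendsto_det_fourierCoeff_zero_of_Lp hnorm (f := hf2.toLp f)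
    (mt (hf2.toLp_eq_toLp_iff .zero).1 hf0)
    (fun k hk => (congr_fun (fourierCoeff_congr_ae hf2.coeFn_toLp) k).trans (hf k hk))
    (fun k hk => (congr_fun (fourierCoeff_congr_ae hmul) k).trans (htf k hk))
  rwa [fourierCoeff_congr_ae htop.coeFn_toLp] at key

end Circle

section Symbol

open Metric

local instance : Fact (0 < 2 * Real.pi) := ⟨Real.two_pi_pos⟩

theorem symbolCoeff_eq_fourierCoeff (t : ℂ → ℂ) (k : ℤ) :
    symbolCoeff t k =
      fourierCoeff (fun x : AddCircle (2 * Real.pi) => t (AddCircle.toCircle x)) k := by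
  rw [fourierCoeff_eq_intervalIntegral _ _ 0, symbolCoeff, zero_add, real_smul]
  push_cast
  congr 1
  refine intervalIntegral.integral_congr fun θ _ => ?_
  have hcircle : ((AddCircle.toCircle (θ : AddCircle (2 * Real.pi)) : Circle) : ℂ) =
      exp (I * θ) := by
    rw [AddCircle.toCircle_apply_mk, div_self Real.two_pi_pos.ne', one_mul, Circle.coe_exp,
      mul_comm]
  have hfourier : fourier (-k) (θ : AddCircle (2 * Real.pi)) = exp (-(I * k * θ)) := by
    rw [fourier_coe_apply]
    congr 1
    push_cast
    field_simp
  simp only [hfourier, hcircle, smul_eq_mul, mul_comm]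

theorem symbolCoeff_eq_circleAverage (t : ℂ → ℂ) (k : ℤ) :
    symbolCoeff t k = Real.circleAverage (fun w => w ^ (-k) * t w) 0 1 := by
  rw [symbolCoeff, Real.circleAverage, real_smul]
  push_cast
  rw [one_div]
  congr 1
  refine intervalIntegral.integral_congr fun θ _ => ?_
  simp only [circleMap_zero, ofReal_one, one_mul, ← exp_int_mul]
  rw [mul_comm, mul_comm (θ : ℂ) I]
  congr 2
  push_cast
  ring

theorem symbolCoeff_congr {s t : ℂ → ℂ} (h : Set.EqOn s t (sphere 0 1)) :
    symbolCoeff s = symbolCoeff t := by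
  ext k
  simp only [symbolCoeff_eq_circleAverage]
  refine Real.circleAverage_congr_sphere fun w hw => ?_
  rw [abs_one] at hw
  simp only [h hw]

theorem toeplitzDet_congr {s t : ℂ → ℂ} (h : Set.EqOn s t (sphere 0 1)) :
    toeplitzDet s = toeplitzDet t := by
  ext N
  rw [toeplitzDet, toeplitzDet, symbolCoeff_congr h]

theorem symbolCoeff_neg_natCast {F : ℂ → ℂ} (hF : DiffContOnCl ℂ F (ball 0 1)) (n : ℕ) :
    symbolCoeff F (-n) = 0 ^ n * F 0 := by
  have hdiff : DiffContOnCl ℂ (fun w => w ^ n * F w) (ball 0 |1|) := by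
    rw [abs_one]
    exact (differentiable_id.pow n).diffContOnCl.smul hF
  simpa [symbolCoeff_eq_circleAverage] using hdiff.circleAverage

theorem symbolCoeff_conj (t : ℂ → ℂ) (k : ℤ) :
    symbolCoeff (fun w => conj (t w)) k = conj (symbolCoeff t (-k)) := by
  simp only [symbolCoeff_eq_fourierCoeff, fourierCoeff, ← integral_conj, smul_eq_mul, map_mul,
    neg_neg, fourier_neg]

theorem toeplitzDet_conj (t : ℂ → ℂ) (N : ℕ) :
    toeplitzDet (fun w => conj (t w)) N = conj (toeplitzDet t N) := by
  rw [toeplitzDet, toeplitzDet, ← Matrix.det_transpose, RingHom.map_det]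
  congr 1
  ext m n
  simp [symbolCoeff_conj]

theorem tendsto_toeplitzDet_of_mul_eq_conj {t f s : ℂ → ℂ} (ht : ContinuousOn t (sphere 0 1))
    (ht1 : ∀ w ∈ sphere 0 1, ‖t w‖ ≤ 1) (hf : DiffContOnCl ℂ f (ball 0 1)) (hf0 : f 0 ≠ 0)
    (hs : DiffContOnCl ℂ s (ball 0 1)) (hs0 : s 0 = 0)
    (htf : ∀ w ∈ sphere 0 1, t w * f w = conj (s w)) :
    Tendsto (toeplitzDet t) atTop (𝓝 0) := by
  have hmem (x : AddCircle (2 * Real.pi)) : (AddCircle.toCircle x : ℂ) ∈ sphere 0 1 :=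
    mem_sphere_zero_iff_norm.2 (Circle.norm_coe _)
  have hcont {F : ℂ → ℂ} (hF : ContinuousOn F (sphere 0 1)) :
      Continuous fun x : AddCircle (2 * Real.pi) => F (AddCircle.toCircle x) :=
    hF.comp_continuous (continuous_subtype_val.comp AddCircle.continuous_toCircle) hmem
  have hfc : ContinuousOn f (sphere 0 1) :=
    hf.continuousOn_ball.mono sphere_subset_closedBall
  have hfL2 := (hcont hfc).memLp_of_hasCompactSupport (p := 2) (μ := AddCircle.haarAddCircle)
    (.of_compactSpace _)
  have hfne : ¬ (fun x : AddCircle (2 * Real.pi) => f (AddCircle.toCircle x))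
      =ᵐ[AddCircle.haarAddCircle] 0 := by
    intro h
    have h0 := congr_fun (fourierCoeff_congr_ae h) 0
    rw [← symbolCoeff_eq_fourierCoeff] at h0
    refine hf0 ?_
    simpa [h0, fourierCoeff] using (symbolCoeff_neg_natCast hf 0).symm
  have hfneg (k : ℤ) (hk : k < 0) : symbolCoeff f k = 0 := by
    obtain ⟨n, rfl⟩ := Int.exists_eq_neg_ofNat hk.le
    rw [symbolCoeff_neg_natCast hf, zero_pow (by omega), zero_mul]
  have htfnonneg (k : ℤ) (hk : 0 ≤ k) : symbolCoeff (fun w => t w * f w) k = 0 := by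
    lift k to ℕ using hk
    rw [symbolCoeff_congr htf, symbolCoeff_conj, symbolCoeff_neg_natCast hs, hs0, mul_zero,
      map_zero]
  simp only [symbolCoeff_eq_fourierCoeff] at hfneg htfnonneg
  have key := tendsto_det_fourierCoeff_zero (hcont ht).aestronglyMeasurable
    (.of_forall fun x => ht1 _ (hmem x)) hfL2 hfne hfneg htfnonneg
  simp only [← symbolCoeff_eq_fourierCoeff] at key
  exact key

theorem tendsto_toeplitzDet_inv_pow_mul_exp_sub_conj {g : ℂ → ℂ}
    (hg : DiffContOnCl ℂ g (ball 0 1)) {n : ℕ} (hn : n ≠ 0) :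
    Tendsto (toeplitzDet fun w => (w ^ n)⁻¹ * exp (g w - conj (g w))) atTop (𝓝 0) := by
  have hgc : ContinuousOn g (sphere 0 1) := hg.continuousOn_ball.mono sphere_subset_closedBall
  have hexp : DiffContOnCl ℂ (fun w => exp (-g w)) (ball 0 1) :=
    differentiable_exp.comp_diffContOnCl hg.neg
  have hpow : ContinuousOn (fun w : ℂ => (w ^ n)⁻¹) (sphere 0 1) :=
    (continuous_pow n).continuousOn.inv₀ fun w hw =>
      pow_ne_zero n (ne_of_mem_sphere hw one_ne_zero)
  refine tendsto_toeplitzDet_of_mul_eq_conj (s := fun w => w ^ n * exp (-g w))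
    (hpow.mul (hgc.sub (continuous_conj.comp_continuousOn hgc)).cexp) (fun w hw => ?_) hexp
    (exp_ne_zero _) ((differentiable_id.pow n).diffContOnCl.smul hexp) (by simp [hn])
    fun w hw => ?_
  · rw [mem_sphere_zero_iff_norm] at hw
    simp [norm_exp, hw]
  · rw [mem_sphere_zero_iff_norm] at hw
    rw [mul_assoc, ← exp_add, map_mul, ← exp_conj, map_neg, map_pow, ← inv_eq_conj hw, inv_pow]
    ring_nf

theorem tendsto_toeplitzDet_zpow_mul_exp_sub_conj {g : ℂ → ℂ}
    (hg : DiffContOnCl ℂ g (ball 0 1)) {m : ℤ} (hm : m ≠ 0) :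
    Tendsto (toeplitzDet fun w => w ^ m * exp (g w - conj (g w))) atTop (𝓝 0) := by
  obtain ⟨n, rfl | rfl⟩ := m.eq_nat_or_neg
  · have hconj : Set.EqOn (fun w => w ^ (n : ℤ) * exp (g w - conj (g w)))
        (fun w => conj ((w ^ n)⁻¹ * exp (-g w - conj (-g w)))) (sphere 0 1) := by
      intro w hw
      rw [mem_sphere_zero_iff_norm] at hw
      simp only [map_mul, map_inv₀, map_pow, ← inv_eq_conj hw, ← exp_conj, map_sub, map_neg,
        conj_conj, inv_pow, inv_inv, zpow_natCast]
      ring_nf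
    rw [toeplitzDet_congr hconj, funext (toeplitzDet_conj _), ← map_zero conj]
    exact (continuous_conj.tendsto 0).comp
      (tendsto_toeplitzDet_inv_pow_mul_exp_sub_conj hg.neg (by simpa using hm))
  · simpa only [zpow_neg, zpow_natCast] using
      tendsto_toeplitzDet_inv_pow_mul_exp_sub_conj hg (n := n) (by simpa using hm)

end Symbol

section AIII

open Metric

theorem one_sub_mul_mem_slitPlane {a w : ℂ} (ha : ‖a‖ < 1) (hw : ‖w‖ ≤ 1) :
    1 - a * w ∈ slitPlane := by
  rw [sub_eq_add_neg]
  refine mem_slitPlane_of_norm_lt_one ?_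
  rw [norm_neg, norm_mul]
  exact (mul_le_of_le_one_right (norm_nonneg a) hw).trans_lt ha

theorem diffContOnCl_sum_log_one_sub_mul {ι : Type*} [Fintype ι] {a : ι → ℂ}
    (ha : ∀ i, ‖a i‖ < 1) : DiffContOnCl ℂ (fun w => ∑ i, log (1 - a i * w)) (ball 0 1) := by
  refine DifferentiableOn.diffContOnCl (DifferentiableOn.fun_sum fun i _ => ?_)
  refine DifferentiableOn.clog (by fun_prop) fun w hw => ?_
  rw [closure_ball _ one_ne_zero, mem_closedBall_zero_iff] at hw
  exact one_sub_mul_mem_slitPlane (ha i) hw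

theorem log_one_sub_conj_mul_inv {a w : ℂ} (ha : ‖a‖ < 1) (hw : ‖w‖ = 1) :
    log (1 - conj a * w⁻¹) = conj (log (1 - a * w)) := by
  rw [← log_conj _ (slitPlane_arg_ne_pi (one_sub_mul_mem_slitPlane ha hw.le)), inv_eq_conj hw]
  simp

variable {Nz NZ : ℕ} {z : Fin Nz → ℂ} {Z : Fin NZ → ℂ}

/-- The part of `aiiiW` that is analytic in the open unit disc; on the unit circle `aiiiW` is this
function minus its complex conjugate. -/
noncomputable def aiiiAnalyticPart (z : Fin Nz → ℂ) (Z : Fin NZ → ℂ) (w : ℂ) : ℂ :=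
  (1 / 2) * (∑ k, log (1 - (Z k)⁻¹ * w) - ∑ j, log (1 - conj (z j) * w))

theorem diffContOnCl_aiiiAnalyticPart (hz : ∀ j, ‖z j‖ < 1) (hZ : ∀ k, 1 < ‖Z k‖) :
    DiffContOnCl ℂ (aiiiAnalyticPart z Z) (ball 0 1) := by
  have hz' (j) : ‖conj (z j)‖ < 1 := by simpa using hz j
  have hZ' (k) : ‖(Z k)⁻¹‖ < 1 := by simpa using inv_lt_one_of_one_lt₀ (hZ k)
  exact ((diffContOnCl_sum_log_one_sub_mul hZ').sub
    (diffContOnCl_sum_log_one_sub_mul hz')).const_smul (1 / 2 : ℂ)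

theorem aiiiW_eq_sub_conj (hz : ∀ j, ‖z j‖ < 1) (hZ : ∀ k, 1 < ‖Z k‖) {w : ℂ} (hw : ‖w‖ = 1) :
    aiiiW Nz NZ z Z w = aiiiAnalyticPart z Z w - conj (aiiiAnalyticPart z Z w) := by
  have hlogz (j) : log (1 - z j / w) = conj (log (1 - conj (z j) * w)) := by
    rw [← log_one_sub_conj_mul_inv (by simpa using hz j) hw, conj_conj, div_eq_mul_inv]
  have hlogZ (k) : log (1 - 1 / (conj (Z k) * w)) = conj (log (1 - (Z k)⁻¹ * w)) := by
    rw [← log_one_sub_conj_mul_inv (by simpa using inv_lt_one_of_one_lt₀ (hZ k)) hw, map_inv₀,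
      ← mul_inv, one_div]
  simp only [aiiiW, aiiiAnalyticPart, hlogz, hlogZ, Finset.sum_sub_distrib, map_mul, map_sub,
    map_sum, map_div₀, map_one, conj_ofNat, div_eq_inv_mul _ (Z _)]
  ring

end AIII

/-- Theorem 3, `α ≠ ω` part: for every nonzero winding `m`, the Toeplitz determinant of
the symbol `z^m · e^{W(z)}` tends to `0`, i.e. the non-matching AIII string correlators
vanish in the limit. -/
theorem aiii_nonmatching_string_correlators_vanish
    (Nz NZ : ℕ) (z : Fin Nz → ℂ) (Z : Fin NZ → ℂ)
    (hz : ∀ j, ‖z j‖ < 1) (hZ : ∀ k, 1 < ‖Z k‖)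
    (m : ℤ) (hm : m ≠ 0) :
    Tendsto
      (fun N : ℕ =>
        toeplitzDet (fun w => w ^ m * Complex.exp (aiiiW Nz NZ z Z w)) N)
      atTop (nhds 0) := by
  refine (tendsto_toeplitzDet_zpow_mul_exp_sub_conj (diffContOnCl_aiiiAnalyticPart hz hZ) hm).congr
    fun N => congr_fun (toeplitzDet_congr fun w hw => ?_) N
  rw [mem_sphere_zero_iff_norm] at hw
  simp only [aiiiW_eq_sub_conj hz hZ hw]
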